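/- arXiv:1408.7107 — 3 statements merged into one kernel-verified Lean document; each statement's English description precedes it below -/
import Mathlib

section
/- Let m₀ ≥ 1 be an integer and let (ε_m)_{m ≥ m₀} be real numbers with 0 ≤ ε_m < π/4 for every m ≥ m₀ and Σ_{m ≥ m₀} ε_m² < ∞. Let V : ℝ → ℝ be nondecreasing on [m₀π, ∞) with V(r) > 0 for all r ≥ m₀π, and suppose that for every integer m ≥ m₀, V is differentiable on the interval I_m = [mπ + ε_m, (m+1)π − ε_{m+1}] and satisfies V'(r) ≥ (2/(π·r))·V(r) for all r ∈ I_m. Then there exists a constant C > 0 such that V(mπ) ≥ C·m^(2/π) for all integers m ≥ m₀. -/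
/-!
The inequality `V' ≥ (a / r) V` says that `log V - a log` is nondecreasing on each interval where
it holds. Across an excluded gap of length `d` starting at `r`, monotonicity of `V` keeps `log V`
from decreasing, while `a log` increases by at most `a d / r`. As `∑ ε_m² < ∞` and `∑ 1 / m² < ∞`
force `∑ ε_m / m < ∞`, the total loss over all gaps is finite, so `log V - a log` is bounded below
along the points `mπ`.
-/

open Set

section Sequences

theorem bddBelow_image_Ici_of_le_succ_add {u δ : ℕ → ℝ} {n₀ : ℕ} (hδ : Summable δ)
    (hu : ∀ n ≥ n₀, u n ≤ u (n + 1) + δ n) : BddBelow (u '' Ici n₀) := by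
  set S : ℕ → ℝ := fun n => ∑ k ∈ Finset.range n, δ k
  have hmono : MonotoneOn (fun n => u n + S n) (Ici n₀) := by
    refine monotoneOn_nat_Ici_of_le_succ fun n hn => ?_
    simp only [S, Finset.sum_range_succ]
    linarith [hu n hn]
  obtain ⟨M, hM⟩ : BddAbove (range S) := hδ.hasSum.tendsto_sum_nat.bddAbove_range
  refine ⟨u n₀ + S n₀ - M, ?_⟩
  rintro _ ⟨n, hn, rfl⟩
  linarith [hmono self_mem_Ici hn hn, hM (mem_range_self n)]

theorem summable_mul_of_summable_sq {ι : Type*} {f g : ι → ℝ} (hf : Summable fun i => f i ^ 2)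
    (hg : Summable fun i => g i ^ 2) : Summable fun i => f i * g i := by
  refine (hf.add hg).of_norm_bounded fun i => ?_
  rw [Real.norm_eq_abs, abs_le]
  constructor <;> nlinarith [sq_nonneg (f i + g i), sq_nonneg (f i - g i)]

theorem summable_div_natCast_of_summable_sq {f : ℕ → ℝ} (hf : Summable fun n => f n ^ 2) :
    Summable fun n => f n / n := by
  have hinv : Summable fun n : ℕ => ((n : ℝ)⁻¹) ^ 2 := by
    simpa only [inv_pow] using Real.summable_nat_pow_inv.mpr one_lt_two
  simpa only [div_eq_mul_inv] using summable_mul_of_summable_sq hf hinv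

theorem summable_succ_div_natCast {f : ℕ → ℝ} (hf : Summable fun n => f n / n) :
    Summable fun n => f (n + 1) / n := by
  have hshift : Summable fun n => f (n + 1) / (n + 1 : ℕ) := (summable_nat_add_iff 1).mpr hf
  refine (hshift.norm.mul_left 2).of_norm_bounded fun n => ?_
  rcases n.eq_zero_or_pos with rfl | hn
  · simp
  have hn1 : (1 : ℝ) ≤ n := by exact_mod_cast hn
  rw [norm_div, norm_div, Real.norm_natCast, Real.norm_natCast, Nat.cast_succ, ← mul_div_assoc,
    div_le_div_iff₀ (by positivity) (by positivity)]
  nlinarith [norm_nonneg (f (n + 1))]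

end Sequences

theorem log_sub_log_le_div {s x y : ℝ} (hs : 0 < s) (hsx : s ≤ x) (hxy : x ≤ y) :
    Real.log y - Real.log x ≤ (y - x) / s := by
  have hx : 0 < x := hs.trans_le hsx
  have hy : 0 < y := hx.trans_le hxy
  calc
    Real.log y - Real.log x = Real.log (y / x) := (Real.log_div hy.ne' hx.ne').symm
    _ ≤ y / x - 1 := Real.log_le_sub_one_of_pos (div_pos hy hx)
    _ = (y - x) / x := by rw [sub_div, div_self hx.ne']
    _ ≤ (y - x) / s := div_le_div_of_nonneg_left (sub_nonneg.mpr hxy) hs hsx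

section DifferentialInequality

variable {V : ℝ → ℝ} {a : ℝ}

theorem monotoneOn_log_sub_mul_log {D : Set ℝ} (hD : Convex ℝ D) (hD₀ : ∀ r ∈ D, r ≠ 0)
    (hpos : ∀ r ∈ D, 0 < V r) (hdiff : DifferentiableOn ℝ V D)
    (hineq : ∀ r ∈ D, a / r * V r ≤ derivWithin V D r) :
    MonotoneOn (fun r => Real.log (V r) - a * Real.log r) D := by
  have hderiv : ∀ r ∈ D, HasDerivWithinAt (fun r => Real.log (V r) - a * Real.log r)
      (derivWithin V D r / V r - a * r⁻¹) D r := fun r hr =>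
    ((hdiff r hr).hasDerivWithinAt.log (hpos r hr).ne').sub
      ((Real.hasDerivAt_log (hD₀ r hr)).hasDerivWithinAt.const_mul a)
  refine monotoneOn_of_hasDerivWithinAt_nonneg hD
    (fun r hr => (hderiv r hr).continuousWithinAt)
    (fun r hr => (hderiv r (interior_subset hr)).mono interior_subset) fun r hr => ?_
  have hrD : r ∈ D := interior_subset hr
  rw [sub_nonneg, ← div_eq_mul_inv, le_div_iff₀ (hpos r hrD)]
  exact hineq r hrD

theorem log_sub_mul_log_le_add_gaps {s t A B : ℝ} (ha : 0 ≤ a) (hs : 0 < s) (hst : s ≤ t)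
    (hsA : s ≤ A) (hBt : B ≤ t) (hmono : MonotoneOn V (Icc s t)) (hpos : 0 < V s)
    (hdiff : DifferentiableOn ℝ V (Icc A B))
    (hineq : ∀ r ∈ Icc A B, a / r * V r ≤ derivWithin V (Icc A B) r) :
    Real.log (V s) - a * Real.log s ≤
      Real.log (V t) - a * Real.log t + a * (((A - s) + (t - B)) / s) := by
  have hsmem : s ∈ Icc s t := left_mem_Icc.mpr hst
  have hVpos : ∀ r ∈ Icc s t, 0 < V r := fun r hr => hpos.trans_le (hmono hsmem hr hr.1)
  have hlogV : ∀ {p q}, p ∈ Icc s t → q ∈ Icc s t → p ≤ q → Real.log (V p) ≤ Real.log (V q) :=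
    fun hp hq hpq => Real.log_le_log (hVpos _ hp) (hmono hp hq hpq)
  have htmem : t ∈ Icc s t := right_mem_Icc.mpr hst
  rcases le_or_gt A B with hAB | hBA
  · have hsub : Icc A B ⊆ Icc s t := Icc_subset_Icc hsA hBt
    have hA : A ∈ Icc A B := left_mem_Icc.mpr hAB
    have hB : B ∈ Icc A B := right_mem_Icc.mpr hAB
    have hmiddle : Real.log (V A) - a * Real.log A ≤ Real.log (V B) - a * Real.log B :=
      monotoneOn_log_sub_mul_log (convex_Icc A B) (fun r hr => (hs.trans_le (hsub hr).1).ne')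
        (fun r hr => hVpos r (hsub hr)) hdiff hineq hA hB hAB
    have hleft := mul_le_mul_of_nonneg_left (log_sub_log_le_div hs le_rfl hsA) ha
    have hright := mul_le_mul_of_nonneg_left (log_sub_log_le_div hs (hsub hB).1 hBt) ha
    rw [add_div]
    linarith [hlogV hsmem (hsub hA) hsA, hlogV (hsub hB) htmem hBt]
  · -- The two gaps now overlap, so they cover `[s, t]`.
    have hcover : Real.log t - Real.log s ≤ ((A - s) + (t - B)) / s :=
      (log_sub_log_le_div hs le_rfl hst).trans
        (div_le_div_of_nonneg_right (by linarith) hs.le)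
    linarith [mul_le_mul_of_nonneg_left hcover ha, hlogV hsmem htmem hst]

theorem exists_pos_mul_rpow_le_of_summable_gaps {x A B : ℕ → ℝ} {n₀ : ℕ} (ha : 0 ≤ a)
    (hx : MonotoneOn x (Ici n₀)) (hx₀ : 0 < x n₀)
    (hxA : ∀ n ≥ n₀, x n ≤ A n) (hBx : ∀ n ≥ n₀, B n ≤ x (n + 1))
    (hgaps : Summable fun n => ((A n - x n) + (x (n + 1) - B n)) / x n)
    (hmono : MonotoneOn V (Ici (x n₀))) (hpos : 0 < V (x n₀))
    (hdiff : ∀ n ≥ n₀, DifferentiableOn ℝ V (Icc (A n) (B n)))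
    (hineq : ∀ n ≥ n₀, ∀ r ∈ Icc (A n) (B n),
      a / r * V r ≤ derivWithin V (Icc (A n) (B n)) r) :
    ∃ C : ℝ, 0 < C ∧ ∀ n ≥ n₀, C * x n ^ a ≤ V (x n) := by
  have hxge : ∀ n ≥ n₀, x n₀ ≤ x n := fun n hn => hx self_mem_Ici hn hn
  have hVpos : ∀ n ≥ n₀, 0 < V (x n) := fun n hn =>
    hpos.trans_le (hmono self_mem_Ici (hxge n hn) (hxge n hn))
  obtain ⟨c, hc⟩ : BddBelow ((fun n => Real.log (V (x n)) - a * Real.log (x n)) '' Ici n₀) :=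
    bddBelow_image_Ici_of_le_succ_add (hgaps.mul_left a) fun n hn =>
      log_sub_mul_log_le_add_gaps ha (hx₀.trans_le (hxge n hn))
        (hx hn (Nat.le_succ_of_le hn) n.le_succ) (hxA n hn) (hBx n hn)
        (hmono.mono fun r hr => (hxge n hn).trans hr.1) (hVpos n hn) (hdiff n hn) (hineq n hn)
  refine ⟨Real.exp c, Real.exp_pos c, fun n hn => ?_⟩
  have hcn : c ≤ Real.log (V (x n)) - a * Real.log (x n) := hc (mem_image_of_mem _ hn)
  rw [Real.rpow_def_of_pos (hx₀.trans_le (hxge n hn)), ← Real.exp_add,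
    ← Real.le_log_iff_exp_le (hVpos n hn)]
  linarith

end DifferentialInequality

theorem stmt_1_general {T a : ℝ} (hT : 0 < T) (ha : 0 ≤ a) {m₀ : ℕ} (hm₀ : 1 ≤ m₀) {ε : ℕ → ℝ}
    (hε : ∀ m, m₀ ≤ m → 0 ≤ ε m) (hεsum : Summable fun m : ℕ => ε m / m)
    {V : ℝ → ℝ} (hmono : MonotoneOn V (Ici (m₀ * T))) (hpos : 0 < V (m₀ * T))
    (hdiff : ∀ m : ℕ, m₀ ≤ m →
      DifferentiableOn ℝ V (Icc (m * T + ε m) ((m + 1) * T - ε (m + 1))))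
    (hineq : ∀ m : ℕ, m₀ ≤ m → ∀ r ∈ Icc (m * T + ε m) ((m + 1) * T - ε (m + 1)),
      derivWithin V (Icc (m * T + ε m) ((m + 1) * T - ε (m + 1))) r ≥ a / r * V r) :
    ∃ C : ℝ, 0 < C ∧ ∀ m : ℕ, m₀ ≤ m → V (m * T) ≥ C * (m : ℝ) ^ a := by
  have hnodes : Monotone fun m : ℕ => (m : ℝ) * T := Nat.mono_cast.mul_const hT.le
  have hgaps : Summable fun m : ℕ =>
      ((m * T + ε m - m * T) + ((m + 1 : ℕ) * T - ((m + 1) * T - ε (m + 1)))) / (m * T) := by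
    refine ((hεsum.add (summable_succ_div_natCast hεsum)).div_const T).congr fun m => ?_
    push_cast
    rw [← add_div, div_div]
    ring
  obtain ⟨C, hC, hgrowth⟩ := exists_pos_mul_rpow_le_of_summable_gaps ha (hnodes.monotoneOn _)
    (by positivity) (fun m hm => le_add_of_nonneg_right (hε m hm))
    (fun m hm => by push_cast; exact sub_le_self _ (hε (m + 1) (Nat.le_succ_of_le hm)))
    hgaps hmono hpos hdiff hineq
  refine ⟨C * T ^ a, by positivity, fun m hm => ?_⟩
  calc
    C * T ^ a * (m : ℝ) ^ a = C * (m * T) ^ a := by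
      rw [Real.mul_rpow m.cast_nonneg hT.le, mul_assoc, mul_comm (T ^ a)]
    _ ≤ V (m * T) := hgrowth m hm

/-- A positive nondecreasing function on `[m₀π, ∞)` satisfying `V' ≥ (2/(πr)) V`
on each interval `[mπ + ε_m, (m+1)π − ε_{m+1}]` with square-summable `ε_m`
grows at least like `m^(2/π)` along the points `mπ`. -/
theorem stmt_1 (m₀ : ℕ) (hm₀ : 1 ≤ m₀) (ε : ℕ → ℝ)
    (hε : ∀ m, m₀ ≤ m → 0 ≤ ε m ∧ ε m < Real.pi / 4)
    (hεsum : Summable (fun m : ℕ => (ε m) ^ 2))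
    (V : ℝ → ℝ)
    (hmono : MonotoneOn V (Set.Ici ((m₀ : ℝ) * Real.pi)))
    (hpos : ∀ r : ℝ, (m₀ : ℝ) * Real.pi ≤ r → 0 < V r)
    (hdiff : ∀ m : ℕ, m₀ ≤ m →
      DifferentiableOn ℝ V
        (Set.Icc ((m : ℝ) * Real.pi + ε m) (((m : ℝ) + 1) * Real.pi - ε (m + 1))))
    (hineq : ∀ m : ℕ, m₀ ≤ m →
      ∀ r ∈ Set.Icc ((m : ℝ) * Real.pi + ε m) (((m : ℝ) + 1) * Real.pi - ε (m + 1)),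
        derivWithin V
            (Set.Icc ((m : ℝ) * Real.pi + ε m) (((m : ℝ) + 1) * Real.pi - ε (m + 1))) r
          ≥ (2 / (Real.pi * r)) * V r) :
    ∃ C : ℝ, 0 < C ∧ ∀ m : ℕ, m₀ ≤ m →
      V ((m : ℝ) * Real.pi) ≥ C * (m : ℝ) ^ (2 / Real.pi) := by
  exact stmt_1_general Real.pi_pos (by positivity) hm₀ (fun m hm => (hε m hm).1)
    (summable_div_natCast_of_summable_sq hεsum) hmono (hpos _ le_rfl) hdiff
    (by simpa only [div_div] using hineq)
end

section
/- Let R > 0 and let δ be a real number with π²/(8R) < δ < π/2. Then R·sin θ − π/4 > 0 for all θ ∈ [δ, π/2], and ∫_δ^{π/2} dθ/(R·sin θ − π/4) ≤ (π/(2R))·log( (π/2 − π²/(8R)) / (δ − π²/(8R)) ). -/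
/-! By Jordan's inequality `sin θ ≥ (2 / π) θ`, the function `R sin θ - m` lies above the line of
slope `2 R / π` with zero `π m / (2 R)`, so the reciprocal of that line, whose primitive is a
logarithm, dominates the integrand. For `m = π / 4` the zero is `π² / (8 R)`. -/

section LogarithmicBound

open MeasureTheory Set
open scoped Interval

variable {a b c : ℝ}

theorem intervalIntegrable_div_sub (K : ℝ) (hc : c ∉ [[a, b]]) :
    IntervalIntegrable (fun x ↦ K / (x - c)) volume a b := by
  simpa only [div_eq_mul_inv] using
    (intervalIntegrable_sub_inv_iff.2 (Or.inr hc)).const_mul K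

theorem integral_div_sub (K : ℝ) (hc : c ∉ [[a, b]]) :
    ∫ x in a..b, K / (x - c) = K * Real.log ((b - c) / (a - c)) := by
  have h_zero : (0 : ℝ) ∉ [[a - c, b - c]] := by
    rw [← image_sub_const_uIcc]
    rintro ⟨x, hx, hxc⟩
    exact hc (sub_eq_zero.1 hxc ▸ hx)
  simp only [div_eq_mul_inv K]
  rw [intervalIntegral.integral_const_mul,
    intervalIntegral.integral_comp_sub_right (fun x ↦ x⁻¹), integral_inv h_zero]

theorem norm_integral_le_mul_log_of_norm_le_div_sub {E : Type*} [NormedAddCommGroup E]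
    [NormedSpace ℝ E] {f : ℝ → E} {K : ℝ} (hca : c < a) (hab : a ≤ b)
    (hf : ∀ x ∈ Ioc a b, ‖f x‖ ≤ K / (x - c)) :
    ‖∫ x in a..b, f x‖ ≤ K * Real.log ((b - c) / (a - c)) := by
  have hc : c ∉ [[a, b]] := notMem_uIcc_of_lt hca (hca.trans_le hab)
  calc
    ‖∫ x in a..b, f x‖ ≤ ∫ x in a..b, K / (x - c) :=
      intervalIntegral.norm_integral_le_of_norm_le hab (.of_forall hf)
        (intervalIntegrable_div_sub K hc)
    _ = K * Real.log ((b - c) / (a - c)) := integral_div_sub K hc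

end LogarithmicBound

section SineMinorant

open Real

variable {R m θ : ℝ}

theorem linear_le_mul_sin_sub (hR : 0 < R) (hθ₀ : 0 ≤ θ) (hθ : θ ≤ π / 2) :
    2 * R / π * (θ - π * m / (2 * R)) ≤ R * sin θ - m :=
  calc
    2 * R / π * (θ - π * m / (2 * R)) = R * (2 / π * θ) - m := by field_simp
    _ ≤ R * sin θ - m := by gcongr; exact mul_le_sin hθ₀ hθ

theorem mul_sin_sub_pos (hR : 0 < R) (hθ₀ : 0 ≤ θ) (hmθ : π * m / (2 * R) < θ)
    (hθ : θ ≤ π / 2) : 0 < R * sin θ - m :=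
  (mul_pos (by positivity) (sub_pos.2 hmθ)).trans_le (linear_le_mul_sin_sub hR hθ₀ hθ)

theorem one_div_mul_sin_sub_le (hR : 0 < R) (hθ₀ : 0 ≤ θ) (hmθ : π * m / (2 * R) < θ)
    (hθ : θ ≤ π / 2) :
    1 / (R * sin θ - m) ≤ π / (2 * R) / (θ - π * m / (2 * R)) :=
  calc
    1 / (R * sin θ - m) ≤ 1 / (2 * R / π * (θ - π * m / (2 * R))) :=
      one_div_le_one_div_of_le (mul_pos (by positivity) (sub_pos.2 hmθ))
        (linear_le_mul_sin_sub hR hθ₀ hθ)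
    _ = π / (2 * R) / (θ - π * m / (2 * R)) := by rw [← div_div, one_div_div]

theorem integral_one_div_mul_sin_sub_le {a b : ℝ} (hR : 0 < R) (ha : 0 ≤ a)
    (hma : π * m / (2 * R) < a) (hab : a ≤ b) (hb : b ≤ π / 2) :
    ∫ θ in a..b, 1 / (R * sin θ - m) ≤
      π / (2 * R) * log ((b - π * m / (2 * R)) / (a - π * m / (2 * R))) := by
  refine (le_norm_self _).trans (norm_integral_le_mul_log_of_norm_le_div_sub hma hab ?_)
  rintro θ ⟨haθ, hθb⟩
  have hθ₀ : 0 ≤ θ := ha.trans haθ.le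
  have hmθ : π * m / (2 * R) < θ := hma.trans haθ
  have hθ : θ ≤ π / 2 := hθb.trans hb
  rw [norm_of_nonneg (one_div_pos.2 (mul_sin_sub_pos hR hθ₀ hmθ hθ)).le]
  exact one_div_mul_sin_sub_le hR hθ₀ hmθ hθ

end SineMinorant

/-- For `R > 0` and `π²/(8R) < δ < π/2`, the integrand `1/(R sin θ − π/4)` is
positive on `[δ, π/2]` and its integral is bounded using `sin θ ≥ (2/π) θ`. -/
theorem stmt_5 (R δ : ℝ) (hR : 0 < R)
    (h1 : Real.pi ^ 2 / (8 * R) < δ) (h2 : δ < Real.pi / 2) :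
    (∀ θ ∈ Set.Icc δ (Real.pi / 2), 0 < R * Real.sin θ - Real.pi / 4) ∧
    (∫ θ in δ..(Real.pi / 2), 1 / (R * Real.sin θ - Real.pi / 4))
      ≤ (Real.pi / (2 * R)) *
        Real.log ((Real.pi / 2 - Real.pi ^ 2 / (8 * R)) / (δ - Real.pi ^ 2 / (8 * R))) := by
  have hδ : 0 ≤ δ := le_trans (by positivity) h1.le
  have h_zero : Real.pi ^ 2 / (8 * R) = Real.pi * (Real.pi / 4) / (2 * R) := by ring
  rw [h_zero] at h1 ⊢
  exact ⟨fun θ hθ ↦ mul_sin_sub_pos hR (hδ.trans hθ.1) (h1.trans_le hθ.1) hθ.2,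
    integral_one_div_mul_sin_sub_le hR hδ h1 h2.le le_rfl⟩
end

section
/- Let (a_m)_{m∈ℤ} be a sequence of nonnegative real numbers with Σ_{m∈ℤ} a_m² < ∞. Then Σ_{m∈ℤ, m≠n} a_m/|m − n| converges to 0 as |n| → ∞; that is, for every ε > 0 there exists N such that for all integers n with |n| ≥ N one has Σ_{m≠n} a_m/|m − n| ≤ ε. -/
/-!
The sum is the value at `n` of the convolution of `a ∈ ℓ^p` with the kernel `k ↦ 1 / |k|`, which
lies in `ℓ^q` for every `q > 1`. By Hölder's inequality the convolution is, uniformly in `n`, the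
limit of its finite partial sums over `m`; each of these tends to `0` as `n → ∞` because the kernel
does, and a uniform limit inherits this.
-/

open Filter Topology

section Holder

variable {ι 𝕜 E : Type*} [NormedRing 𝕜] [NormedAddCommGroup E] [Module 𝕜 E] [IsBoundedSMul 𝕜 E]
  {p q : ℝ} {g : ι → 𝕜} {f : ι → E}

theorem summable_norm_smul_of_Lp_Lq (hpq : p.HolderConjugate q)
    (hg : Summable fun i => ‖g i‖ ^ p) (hf : Summable fun i => ‖f i‖ ^ q) :
    Summable fun i => ‖g i • f i‖ :=
  .of_nonneg_of_le (fun _ => norm_nonneg _) (fun _ => norm_smul_le _ _) <|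
    Real.summable_mul_of_Lp_Lq_of_nonneg hpq (fun _ => norm_nonneg _) (fun _ => norm_nonneg _) hg hf

theorem norm_tsum_smul_le_Lp_mul_Lq (hpq : p.HolderConjugate q)
    (hg : Summable fun i => ‖g i‖ ^ p) (hf : Summable fun i => ‖f i‖ ^ q) :
    ‖∑' i, g i • f i‖ ≤ (∑' i, ‖g i‖ ^ p) ^ (1 / p) * (∑' i, ‖f i‖ ^ q) ^ (1 / q) := by
  have hgf := summable_norm_smul_of_Lp_Lq hpq hg hf
  obtain ⟨hprod, hle⟩ := Real.summable_and_inner_le_Lp_mul_Lq_tsum_of_nonneg hpq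
    (fun i => norm_nonneg (g i)) (fun i => norm_nonneg (f i)) hg hf
  calc ‖∑' i, g i • f i‖ ≤ ∑' i, ‖g i • f i‖ := norm_tsum_le_tsum_norm hgf
    _ ≤ ∑' i, ‖g i‖ * ‖f i‖ := hgf.tsum_le_tsum (fun _ => norm_smul_le _ _) hprod
    _ ≤ _ := hle

theorem norm_tsum_smul_sub_sum_le_Lp_mul_Lq [CompleteSpace E] (hpq : p.HolderConjugate q)
    (hg : Summable fun i => ‖g i‖ ^ p) (hf : Summable fun i => ‖f i‖ ^ q) (s : Finset ι) :
    ‖∑' i, g i • f i - ∑ i ∈ s, g i • f i‖ ≤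
      (∑' i, ‖g i‖ ^ p) ^ (1 / p) * (∑' i : {i // i ∉ s}, ‖f i‖ ^ q) ^ (1 / q) := by
  have htail : ∑' i, g i • f i - ∑ i ∈ s, g i • f i = ∑' i : {i // i ∉ s}, g i • f i :=
    sub_eq_of_eq_add' (summable_norm_smul_of_Lp_Lq hpq hg hf).of_norm.sum_add_tsum_compl.symm
  have hg_tail : ∑' i : {i // i ∉ s}, ‖g i‖ ^ p ≤ ∑' i, ‖g i‖ ^ p :=
    hg.tsum_subtype_le _ {i | i ∉ s} fun _ => by positivity
  calc ‖∑' i, g i • f i - ∑ i ∈ s, g i • f i‖ = ‖∑' i : {i // i ∉ s}, g i • f i‖ := by rw [htail]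
    _ ≤ (∑' i : {i // i ∉ s}, ‖g i‖ ^ p) ^ (1 / p) *
          (∑' i : {i // i ∉ s}, ‖f i‖ ^ q) ^ (1 / q) :=
      norm_tsum_smul_le_Lp_mul_Lq hpq (hg.subtype {i | i ∉ s}) (hf.subtype {i | i ∉ s})
    _ ≤ _ := by
      gcongr
      exact hpq.one_div_nonneg

end Holder

theorem tendsto_cofinite_zero_of_summable_norm_rpow {ι E : Type*} [SeminormedAddCommGroup E]
    {p : ℝ} (hp : 0 < p) {f : ι → E} (hf : Summable fun i => ‖f i‖ ^ p) :
    Tendsto f cofinite (𝓝 0) := by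
  have hroot := hf.tendsto_cofinite_zero.rpow_const (p := p⁻¹) (.inr (by positivity))
  simp only [Real.rpow_rpow_inv (norm_nonneg _) hp.ne', Real.zero_rpow (inv_ne_zero hp.ne')]
    at hroot
  exact tendsto_zero_iff_norm_tendsto_zero.mpr hroot

section Convolution

variable {G 𝕜 E : Type*} [AddGroup G] [NormedRing 𝕜] [NormedAddCommGroup E] [Module 𝕜 E]
  [IsBoundedSMul 𝕜 E]

theorem tendsto_sum_sub_smul_cofinite_zero {g : G → 𝕜} (hg : Tendsto g cofinite (𝓝 0))
    (f : G → E) (s : Finset G) :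
    Tendsto (fun n => ∑ m ∈ s, g (m - n) • f m) cofinite (𝓝 0) := by
  have hterm (m : G) : Tendsto (fun n => g (m - n) • f m) cofinite (𝓝 0) := by
    simpa only [zero_smul, Function.comp_apply] using
      (hg.comp (sub_right_injective (b := m)).tendsto_cofinite).smul_const (f m)
  simpa only [Finset.sum_const_zero] using tendsto_finsetSum s fun m _ => hterm m

variable [CompleteSpace E] {p q : ℝ} {g : G → 𝕜} {f : G → E}

theorem tendstoUniformly_sum_sub_smul (hpq : p.HolderConjugate q)
    (hg : Summable fun k => ‖g k‖ ^ p) (hf : Summable fun m => ‖f m‖ ^ q) :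
    TendstoUniformly (fun (s : Finset G) n => ∑ m ∈ s, g (m - n) • f m)
      (fun n => ∑' m, g (m - n) • f m) atTop := by
  have htail : Tendsto (fun s : Finset G => (∑' k, ‖g k‖ ^ p) ^ (1 / p) *
      (∑' m : {m // m ∉ s}, ‖f m‖ ^ q) ^ (1 / q)) atTop (𝓝 0) := by
    have h := (tendsto_tsum_compl_atTop_zero fun m => ‖f m‖ ^ q).rpow_const
      (p := 1 / q) (.inr hpq.symm.one_div_nonneg)
    rw [Real.zero_rpow hpq.symm.one_div_ne_zero] at h
    simpa only [mul_zero] using h.const_mul ((∑' k, ‖g k‖ ^ p) ^ (1 / p))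
  refine Metric.tendstoUniformly_iff.mpr fun ε hε => ?_
  filter_upwards [htail.eventually_lt_const hε] with s hs n
  have htranslate : ∑' m, ‖g (m - n)‖ ^ p = ∑' k, ‖g k‖ ^ p :=
    (Equiv.subRight n).tsum_eq fun k => ‖g k‖ ^ p
  have hbound := norm_tsum_smul_sub_sum_le_Lp_mul_Lq hpq
    ((Equiv.subRight n).summable_iff.mpr hg) hf s
  simp only [Equiv.subRight_apply, htranslate] at hbound
  exact (dist_eq_norm _ _).trans_lt (hbound.trans_lt hs)

theorem tendsto_tsum_sub_smul_cofinite_zero (hpq : p.HolderConjugate q)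
    (hg : Summable fun k => ‖g k‖ ^ p) (hf : Summable fun m => ‖f m‖ ^ q) :
    Tendsto (fun n => ∑' m, g (m - n) • f m) cofinite (𝓝 0) :=
  (tendstoUniformly_sum_sub_smul hpq hg hf).tendsto_of_eventually_tendsto
    (.of_forall <| tendsto_sum_sub_smul_cofinite_zero
      (tendsto_cofinite_zero_of_summable_norm_rpow hpq.pos hg) f)
    tendsto_const_nhds

end Convolution

theorem summable_norm_inv_abs_int_rpow {q : ℝ} (hq : 1 < q) :
    Summable fun k : ℤ => ‖|(k : ℝ)|⁻¹‖ ^ q := by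
  simpa only [norm_inv, Real.norm_eq_abs, abs_abs, Real.inv_rpow (abs_nonneg _),
    ← Real.rpow_neg (abs_nonneg _)] using Real.summable_abs_int_rpow hq

theorem eventually_cofinite_int_iff_exists_nat_le_abs {P : ℤ → Prop} :
    (∀ᶠ n in cofinite, P n) ↔ ∃ N : ℕ, ∀ n : ℤ, (N : ℤ) ≤ |n| → P n := by
  rw [Int.cofinite_eq, ← comap_abs_atTop, (atTop_basis.comap _).eventually_iff]
  constructor
  · rintro ⟨N, -, hN⟩
    exact ⟨N.toNat, fun n hn => hN (N.self_le_toNat.trans hn)⟩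
  · rintro ⟨N, hN⟩
    exact ⟨N, trivial, fun n hn => hN n hn⟩

theorem stmt_6_general {E : Type*} [NormedAddCommGroup E] [NormedSpace ℝ E] [CompleteSpace E]
    {p : ℝ} (hp : 1 < p) {a : ℤ → E} (ha : Summable fun m => ‖a m‖ ^ p) :
    Tendsto (fun n : ℤ => ∑' m : {m : ℤ // m ≠ n}, |((m : ℤ) : ℝ) - (n : ℝ)|⁻¹ • a m)
      cofinite (𝓝 0) := by
  have hpq := Real.HolderConjugate.conjExponent hp
  have hconv := tendsto_tsum_sub_smul_cofinite_zero hpq.symm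
    (summable_norm_inv_abs_int_rpow hpq.symm.lt) ha
  refine hconv.congr fun n => ?_
  simp only [Int.cast_sub]
  -- The diagonal term `m = n` vanishes because `0⁻¹ = 0`.
  refine (tsum_subtype_eq_of_support_subset (s := {m | m ≠ n}) ?_).symm
  rintro m hm rfl
  simp at hm

/-- For a square-summable nonnegative sequence `(a_m)`, the sums
`Σ_{m≠n} a_m/|m − n|` tend to `0` as `|n| → ∞`. -/
theorem stmt_6 (a : ℤ → ℝ) (ha : ∀ m, 0 ≤ a m)
    (hs : Summable fun m => (a m) ^ 2) :
    ∀ ε : ℝ, 0 < ε → ∃ N : ℕ, ∀ n : ℤ, (N : ℤ) ≤ |n| →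
      (∑' m : {m : ℤ // m ≠ n}, a m / |((m : ℤ) : ℝ) - (n : ℝ)|) ≤ ε := by
  intro ε hε
  have hlim := stmt_6_general one_lt_two (a := a) (by simpa using hs)
  simp only [smul_eq_mul, inv_mul_eq_div] at hlim
  exact eventually_cofinite_int_iff_exists_nat_le_abs.mp (hlim.eventually_le_const hε)
end
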